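/- Let ζ_p ⊂ Y_p be (the lift to the warped product M = M₄ ×_f Y of) a compact submanifold of Y of co-dimension m, γ a null geodesic orthogonal to ζ_p with tangent N = (N̂, N̄), {E_A} the parallel transports along γ of an orthonormal basis {e_A} of vectors tangent to ζ_p, and P^{νσ} = γ^{AB} E^ν_A E^σ_B the parallel propagation of the projector onto ζ_p. Then R_{μνρσ} N^μ N^ρ P^{νσ} = δ^{AB} R̄_{ijkl} N̄^i N̄^k Ē^j_{A∥} Ē^l_{B∥} − (D−m) f⁻¹ N̂^a ∇̂_a (N̂^b ∇̂_b f)|_γ = [ f⁻⁴ δ^{AB} R̄_{ijkl} 𝒩^i 𝒩^k Ē^j_{A∥} Ē^l_{B∥} − (D−m) f⁻¹ d²f/du² ]|_γ, where Ē^i_{A∥} are the ḡ-parallel transports along the fiber projection of γ of f|_p e^i_A, and 𝒩^i = f² N̄^i. -/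

import Mathlib

open Filter MeasureTheory
open scoped BigOperators Topology

noncomputable section

namespace Paper

variable {ι : Type*} [Fintype ι] [DecidableEq ι]
variable {κ : Type*} [Fintype κ] [DecidableEq κ]

/-- Coordinate partial derivative of a scalar field in the direction `ρ`. -/
def pd (h : (ι → ℝ) → ℝ) (ρ : ι) (x : ι → ℝ) : ℝ :=
  fderiv ℝ h x (Pi.single ρ 1)

/-- The inverse metric. -/
def ginv (g : (ι → ℝ) → Matrix ι ι ℝ) (x : ι → ℝ) : Matrix ι ι ℝ :=
  (g x)⁻¹

/-- Christoffel symbols `Γ^μ_{ρσ} = ½ g^{μν}(∂_ρ g_{νσ} + ∂_σ g_{νρ} − ∂_ν g_{ρσ})`. -/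
def Γc (g : (ι → ℝ) → Matrix ι ι ℝ) (μ ρ σ : ι) (x : ι → ℝ) : ℝ :=
  (1 / 2) * ∑ ν, ginv g x μ ν *
    (pd (fun y => g y ν σ) ρ x + pd (fun y => g y ν ρ) σ x - pd (fun y => g y ρ σ) ν x)

/-- Riemann curvature tensor `R^α_{βμν}`. -/
def Riem (g : (ι → ℝ) → Matrix ι ι ℝ) (α β μ ν : ι) (x : ι → ℝ) : ℝ :=
  pd (Γc g α ν β) μ x - pd (Γc g α μ β) ν x
    + ∑ lam, Γc g α μ lam x * Γc g lam ν β x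
    - ∑ lam, Γc g α ν lam x * Γc g lam μ β x

/-- Riemann tensor with the first index lowered, `R_{μνρσ} = g_{μλ} R^λ_{νρσ}`. -/
def RiemLow (g : (ι → ℝ) → Matrix ι ι ℝ) (μ ν ρ σ : ι) (x : ι → ℝ) : ℝ :=
  ∑ lam, g x μ lam * Riem g lam ν ρ σ x

/-- Ricci tensor `R_{μν} = R^ρ_{μρν}`. -/
def Ric (g : (ι → ℝ) → Matrix ι ι ℝ) (μ ν : ι) (x : ι → ℝ) : ℝ :=
  ∑ ρ, Riem g ρ μ ρ ν x

/-- Scalar product of two vectors with respect to the metric at `x`. -/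
def sq (g : (ι → ℝ) → Matrix ι ι ℝ) (x : ι → ℝ) (v w : ι → ℝ) : ℝ :=
  ∑ μ, ∑ ν, g x μ ν * v μ * w ν

/-- Velocity (tangent vector field) of a parametrized curve. -/
def vel (γ : ℝ → ι → ℝ) (u : ℝ) : ι → ℝ :=
  fun μ => deriv (fun w => γ w μ) u

/-- Covariant derivative, along the curve `γ`, of a vector field `V` given along `γ`. -/
def covD (g : (ι → ℝ) → Matrix ι ι ℝ) (γ V : ℝ → ι → ℝ) (u : ℝ) (μ : ι) : ℝ :=
  deriv (fun w => V w μ) u + ∑ ρ, ∑ σ, Γc g μ ρ σ (γ u) * vel γ u ρ * V u σ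

/-- The (affinely parametrized) geodesic equation at parameter value `u`. -/
def GeodesicAt (g : (ι → ℝ) → Matrix ι ι ℝ) (γ : ℝ → ι → ℝ) (u : ℝ) : Prop :=
  ∀ μ, covD g γ (vel γ) u μ = 0

/-- `γ` is an affinely parametrized geodesic of `g`. -/
def IsGeodesic (g : (ι → ℝ) → Matrix ι ι ℝ) (γ : ℝ → ι → ℝ) : Prop :=
  ∀ u, GeodesicAt g γ u

/-- `E` is parallelly transported along `γ`. -/
def IsParallel (g : (ι → ℝ) → Matrix ι ι ℝ) (γ E : ℝ → ι → ℝ) : Prop :=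
  ∀ u μ, covD g γ E u μ = 0

def SmoothCurve (γ : ℝ → ι → ℝ) : Prop :=
  ∀ μ, ContDiff ℝ (⊤ : ℕ∞) fun u => γ u μ

/-- A smooth symmetric everywhere-nondegenerate metric. -/
def SmoothMetric (g : (ι → ℝ) → Matrix ι ι ℝ) : Prop :=
  (∀ μ ν, ContDiff ℝ (⊤ : ℕ∞) fun x => g x μ ν) ∧
    (∀ x μ ν, g x μ ν = g x ν μ) ∧ ∀ x, IsUnit (g x).det

/-- Lorentzian signature `(−,+,…,+)`: there is a timelike vector whose `g`-orthogonal
complement is positive definite. -/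
def Lorentzian (g : (ι → ℝ) → Matrix ι ι ℝ) : Prop :=
  SmoothMetric g ∧
    ∀ x, ∃ t : ι → ℝ, sq g x t t < 0 ∧ ∀ v : ι → ℝ, sq g x t v = 0 → v ≠ 0 → 0 < sq g x v v

/-- Riemannian (positive definite) metric. -/
def Riemannian (g : (ι → ℝ) → Matrix ι ι ℝ) : Prop :=
  SmoothMetric g ∧ ∀ x, ∀ v : ι → ℝ, v ≠ 0 → 0 < sq g x v v

def NullVec (g : (ι → ℝ) → Matrix ι ι ℝ) (x v : ι → ℝ) : Prop :=
  sq g x v v = 0 ∧ v ≠ 0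

/-- A time orientation: an everywhere timelike vector field. -/
def TimeOrientation (g : (ι → ℝ) → Matrix ι ι ℝ) (T : (ι → ℝ) → ι → ℝ) : Prop :=
  ∀ x, sq g x (T x) (T x) < 0

/-- `v` is a future-pointing causal vector at `x` (wrt the time orientation `T`). -/
def FutureCausal (g : (ι → ℝ) → Matrix ι ι ℝ) (T : (ι → ℝ) → ι → ℝ) (x v : ι → ℝ) : Prop :=
  sq g x v v ≤ 0 ∧ v ≠ 0 ∧ sq g x (T x) v < 0

/-- `S` is met exactly once by every inextendible future-directed causal curve
(inextendibility being encoded by parametrization by Euclidean arclength on all of `ℝ`). -/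
def IsCauchySurface (g : (ι → ℝ) → Matrix ι ι ℝ) (T : (ι → ℝ) → ι → ℝ)
    (S : Set (ι → ℝ)) : Prop :=
  ∀ γ : ℝ → ι → ℝ, (∀ μ, Differentiable ℝ fun u => γ u μ) →
    (∀ u, FutureCausal g T (γ u) (vel γ u)) →
    (∀ u, ∑ μ, (vel γ u μ) ^ 2 = 1) → ∃! u, γ u ∈ S

/-- `g`-gradient vector of a scalar function. -/
def gradVec (g : (ι → ℝ) → Matrix ι ι ℝ) (τ : (ι → ℝ) → ℝ) (x : ι → ℝ) : ι → ℝ :=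
  fun μ => ∑ ν, ginv g x μ ν * pd τ ν x

/-- Existence of a non-compact (spacelike) Cauchy hypersurface, encoded as a regular
level set of a smooth function with timelike gradient. -/
def HasNoncompactCauchySurface (g : (ι → ℝ) → Matrix ι ι ℝ)
    (T : (ι → ℝ) → ι → ℝ) : Prop :=
  ∃ τ : (ι → ℝ) → ℝ, ContDiff ℝ (⊤ : ℕ∞) τ ∧ ¬ IsCompact {x | τ x = 0} ∧
    (∀ x, τ x = 0 → sq g x (gradVec g τ x) (gradVec g τ x) < 0) ∧
    IsCauchySurface g T {x | τ x = 0}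

/-- Null geodesic completeness: every null initial datum extends to a geodesic
defined for all values of the affine parameter. -/
def NullComplete (g : (ι → ℝ) → Matrix ι ι ℝ) : Prop :=
  ∀ x v : ι → ℝ, NullVec g x v →
    ∃ γ : ℝ → ι → ℝ, SmoothCurve γ ∧ γ 0 = x ∧ vel γ 0 = v ∧ IsGeodesic g γ

/-- Future null geodesic completeness. -/
def FutureNullComplete (g : (ι → ℝ) → Matrix ι ι ℝ) (T : (ι → ℝ) → ι → ℝ) : Prop :=
  ∀ x v : ι → ℝ, NullVec g x v → FutureCausal g T x v →
    ∃ γ : ℝ → ι → ℝ, SmoothCurve γ ∧ γ 0 = x ∧ vel γ 0 = v ∧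
      ∀ u, 0 ≤ u → GeodesicAt g γ u

/-! ### Submanifolds given implicitly as regular zero sets -/

/-- Differential (lowered normal covectors) of the defining map `F`. -/
def dFm (F : (ι → ℝ) → κ → ℝ) (α : κ) (μ : ι) (x : ι → ℝ) : ℝ :=
  pd (fun y => F y α) μ x

/-- The normal vectors `ν_α = grad F^α` spanning the normal space. -/
def normalBasis (g : (ι → ℝ) → Matrix ι ι ℝ) (F : (ι → ℝ) → κ → ℝ) (α : κ)
    (x : ι → ℝ) : ι → ℝ :=
  fun μ => ∑ ν, ginv g x μ ν * dFm F α ν x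

/-- Gram matrix `W_{αβ} = g(ν_α, ν_β)` of the normals. -/
def gram (g : (ι → ℝ) → Matrix ι ι ℝ) (F : (ι → ℝ) → κ → ℝ) (x : ι → ℝ) :
    Matrix κ κ ℝ :=
  Matrix.of fun α β => ∑ μ, dFm F α μ x * normalBasis g F β x μ

/-- The (contravariant) orthogonal projector onto the tangent space of `{F = 0}`. -/
def tanProj (g : (ι → ℝ) → Matrix ι ι ℝ) (F : (ι → ℝ) → κ → ℝ) (x : ι → ℝ)
    (μ ν : ι) : ℝ :=
  ginv g x μ ν -
    ∑ α, ∑ β, (gram g F x)⁻¹ α β * normalBasis g F α x μ * normalBasis g F β x ν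

/-- Covariant Hessian `∇_μ ∇_ν F^α`. -/
def hessF (g : (ι → ℝ) → Matrix ι ι ℝ) (F : (ι → ℝ) → κ → ℝ) (α : κ) (μ ν : ι)
    (x : ι → ℝ) : ℝ :=
  pd (fun y => dFm F α ν y) μ x - ∑ lam, Γc g lam μ ν x * dFm F α lam x

/-- The expansion `θ(n)` of the submanifold `{F = 0}` along the normal
`n = ∑ c_α ν_α`, namely `θ(n) = ∑_α c_α h^{μν} ∇_μ∇_ν F^α`. -/
def expansionCoeff (g : (ι → ℝ) → Matrix ι ι ℝ) (F : (ι → ℝ) → κ → ℝ) (x : ι → ℝ)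
    (c : κ → ℝ) : ℝ :=
  ∑ α, c α * ∑ μ, ∑ ν, tanProj g F x μ ν * hessF g F α μ ν x

/-- `v` is tangent to the level set `{F = 0}` at `x`. -/
def TangentTo (F : (ι → ℝ) → κ → ℝ) (x v : ι → ℝ) : Prop :=
  ∀ α, ∑ μ, dFm F α μ x * v μ = 0

/-- The normal vector with components `c` in the basis of normals. -/
def NormalComb (g : (ι → ℝ) → Matrix ι ι ℝ) (F : (ι → ℝ) → κ → ℝ) (x : ι → ℝ)
    (c : κ → ℝ) : ι → ℝ :=
  fun μ => ∑ α, c α * normalBasis g F α x μ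

/-- A closed (compact without boundary) spacelike submanifold, given as the regular
zero set of the smooth map `F`, of co-dimension `card κ`. -/
def ClosedSpacelikeSubmanifold (g : (ι → ℝ) → Matrix ι ι ℝ)
    (F : (ι → ℝ) → κ → ℝ) : Prop :=
  (∀ α, ContDiff ℝ (⊤ : ℕ∞) fun x => F x α) ∧
    IsCompact {x | ∀ α, F x α = 0} ∧ {x | ∀ α, F x α = 0}.Nonempty ∧
    (∀ x, (∀ α, F x α = 0) → IsUnit (gram g F x).det) ∧
    (∀ x, (∀ α, F x α = 0) → ∀ v, TangentTo F x v → v ≠ 0 → 0 < sq g x v v)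

/-- Future-trapped: every future-pointing causal normal has negative expansion. -/
def FutureTrapped (g : (ι → ℝ) → Matrix ι ι ℝ) (T : (ι → ℝ) → ι → ℝ)
    (F : (ι → ℝ) → κ → ℝ) : Prop :=
  ∀ x, (∀ α, F x α = 0) → ∀ c : κ → ℝ,
    FutureCausal g T x (NormalComb g F x c) → expansionCoeff g F x c < 0

/-! ### Warped products -/

def basePt {d₁ d₂ : ℕ} (x : (Fin d₁ ⊕ Fin d₂) → ℝ) : Fin d₁ → ℝ :=
  fun a => x (Sum.inl a)

def fibPt {d₁ d₂ : ℕ} (x : (Fin d₁ ⊕ Fin d₂) → ℝ) : Fin d₂ → ℝ :=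
  fun i => x (Sum.inr i)

/-- The warped product metric `g = ĝ + f² ḡ` in adapted coordinates. -/
def warped {d₁ d₂ : ℕ} (gB : (Fin d₁ → ℝ) → Matrix (Fin d₁) (Fin d₁) ℝ)
    (gF : (Fin d₂ → ℝ) → Matrix (Fin d₂) (Fin d₂) ℝ) (f : (Fin d₁ → ℝ) → ℝ) :
    ((Fin d₁ ⊕ Fin d₂) → ℝ) → Matrix (Fin d₁ ⊕ Fin d₂) (Fin d₁ ⊕ Fin d₂) ℝ :=
  fun x => Matrix.of fun μ ν =>
    match μ, ν with
    | Sum.inl a, Sum.inl b => gB (basePt x) a b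
    | Sum.inl _, Sum.inr _ => 0
    | Sum.inr _, Sum.inl _ => 0
    | Sum.inr i, Sum.inr j => (f (basePt x)) ^ 2 * gF (fibPt x) i j

/-- Projection of a spacetime curve to the base. -/
def baseCurve {d₁ d₂ : ℕ} (γ : ℝ → (Fin d₁ ⊕ Fin d₂) → ℝ) : ℝ → Fin d₁ → ℝ :=
  fun u => basePt (γ u)

/-- Projection of a spacetime curve to the fiber. -/
def fibCurve {d₁ d₂ : ℕ} (γ : ℝ → (Fin d₁ ⊕ Fin d₂) → ℝ) : ℝ → Fin d₂ → ℝ :=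
  fun u => fibPt (γ u)

/-- Lift of a base vector to the warped product (vanishing fiber components). -/
def liftVec {d₁ d₂ : ℕ} (v : Fin d₁ → ℝ) : (Fin d₁ ⊕ Fin d₂) → ℝ :=
  fun μ => match μ with
  | Sum.inl a => v a
  | Sum.inr _ => 0

/-- Lift of a base vector field (e.g. a time orientation) to the warped product. -/
def liftT {d₁ d₂ : ℕ} (T : (Fin d₁ → ℝ) → Fin d₁ → ℝ) :
    ((Fin d₁ ⊕ Fin d₂) → ℝ) → (Fin d₁ ⊕ Fin d₂) → ℝ :=
  fun x => liftVec (T (basePt x))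

/-- Defining map of the lift `ζ_p ⊆ Y_p` of the submanifold `{Fb = 0} ⊆ Y`. -/
def liftF {d₁ d₂ m' : ℕ} (p : Fin d₁ → ℝ) (Fb : (Fin d₂ → ℝ) → Fin m' → ℝ) :
    ((Fin d₁ ⊕ Fin d₂) → ℝ) → (Fin d₁ ⊕ Fin m') → ℝ :=
  fun x α => match α with
  | Sum.inl a => x (Sum.inl a) - p a
  | Sum.inr β => Fb (fibPt x) β

/-- Covariant Hessian `∇_μ∇_ν f` of a scalar function. -/
def hess (g : (ι → ℝ) → Matrix ι ι ℝ) (f : (ι → ℝ) → ℝ) (μ ν : ι) (x : ι → ℝ) : ℝ :=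
  pd (fun y => pd f ν y) μ x - ∑ lam, Γc g lam μ ν x * pd f lam x

/-- `∇^μ f ∇_μ f`. -/
def gradSq (g : (ι → ℝ) → Matrix ι ι ℝ) (f : (ι → ℝ) → ℝ) (x : ι → ℝ) : ℝ :=
  ∑ μ, ∑ ν, ginv g x μ ν * pd f μ x * pd f ν x

/-! ### Parametrized submanifolds and their expansions -/

/-- Partial derivative of a parametrization `φ`. -/
def dpar {k : ℕ} (φ : (Fin k → ℝ) → ι → ℝ) (A : Fin k) (μ : ι)
    (y : Fin k → ℝ) : ℝ :=
  fderiv ℝ (fun z => φ z μ) y (Pi.single A 1)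

/-- First fundamental form of a parametrized submanifold. -/
def firstFF {k : ℕ} (g : (ι → ℝ) → Matrix ι ι ℝ) (φ : (Fin k → ℝ) → ι → ℝ)
    (y : Fin k → ℝ) : Matrix (Fin k) (Fin k) ℝ :=
  Matrix.of fun A B => ∑ μ, ∑ ν, g (φ y) μ ν * dpar φ A μ y * dpar φ B ν y

/-- The expansion `θ(n) = n_μ H^μ` of a parametrized submanifold along a normal `n`,
via `θ(n) = −γ^{AB} n_μ (∂_A∂_B φ^μ + Γ^μ_{ρσ} ∂_A φ^ρ ∂_B φ^σ)`. -/
def expansionPar {k : ℕ} (g : (ι → ℝ) → Matrix ι ι ℝ) (φ : (Fin k → ℝ) → ι → ℝ)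
    (y : Fin k → ℝ) (n : ι → ℝ) : ℝ :=
  - ∑ A, ∑ B, (firstFF g φ y)⁻¹ A B *
      ∑ μ, (∑ ν, g (φ y) μ ν * n ν) *
        (fderiv ℝ (fun z => dpar φ B μ z) y (Pi.single A 1)
          + ∑ ρ, ∑ σ, Γc g μ ρ σ (φ y) * dpar φ A ρ y * dpar φ B σ y)


/-! ### Helper lemmas -/

lemma contDiff_det {E : Type*} [NormedAddCommGroup E] [NormedSpace ℝ E]
    (M : E → Matrix ι ι ℝ) (hM : ∀ i j, ContDiff ℝ (⊤ : ℕ∞) fun x => M x i j) :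
    ContDiff ℝ (⊤ : ℕ∞) fun x => (M x).det := by
  simp only [Matrix.det_apply]
  refine ContDiff.sum fun σ _ => ?_
  refine ContDiff.const_smul _ ?_
  exact contDiff_prod fun i _ => hM _ _

lemma contDiff_ginv {g : (ι → ℝ) → Matrix ι ι ℝ} (hg : SmoothMetric g) (μ ν : ι) :
    ContDiff ℝ (⊤ : ℕ∞) fun x => ginv g x μ ν := by
  have h : (fun x => ginv g x μ ν) = fun x => ((g x).det)⁻¹ *
      ((g x).updateRow ν (Pi.single μ 1)).det := by
    funext x
    simp only [ginv, Matrix.inv_def, Ring.inverse_eq_inv', Matrix.smul_apply, smul_eq_mul,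
      Matrix.adjugate_apply]
  rw [h]
  refine ContDiff.mul (ContDiff.inv (contDiff_det _ hg.1) fun x => (hg.2.2 x).ne_zero) ?_
  refine contDiff_det _ fun i j => ?_
  by_cases hi : i = ν
  · subst hi
    simp only [Matrix.updateRow_self]
    exact contDiff_const
  · simp only [Matrix.updateRow_ne hi]
    exact hg.1 i j

lemma contDiff_pd {h : (ι → ℝ) → ℝ} (hh : ContDiff ℝ (⊤ : ℕ∞) h) (ρ : ι) :
    ContDiff ℝ (⊤ : ℕ∞) (pd h ρ) := by
  unfold pd
  exact (hh.fderiv_right (by simp)).clm_apply contDiff_const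

lemma contDiff_Γc {g : (ι → ℝ) → Matrix ι ι ℝ} (hg : SmoothMetric g) (μ ρ σ : ι) :
    ContDiff ℝ (⊤ : ℕ∞) (Γc g μ ρ σ) := by
  unfold Γc
  refine contDiff_const.mul (ContDiff.sum fun ν _ => (contDiff_ginv hg _ _).mul ?_)
  exact ((contDiff_pd (hg.1 _ _) _).add (contDiff_pd (hg.1 _ _) _)).sub (contDiff_pd (hg.1 _ _) _)

lemma contDiff_gradVec {g : (ι → ℝ) → Matrix ι ι ℝ} (hg : SmoothMetric g) {f : (ι → ℝ) → ℝ}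
    (hf : ContDiff ℝ (⊤ : ℕ∞) f) (μ : ι) :
    ContDiff ℝ (⊤ : ℕ∞) (fun x => gradVec g f x μ) := by
  unfold gradVec
  exact ContDiff.sum fun ν _ => (contDiff_ginv hg _ _).mul (contDiff_pd hf _)

lemma sum_g_ginv {g : (ι → ℝ) → Matrix ι ι ℝ} (hg : SmoothMetric g) (x : ι → ℝ) (μ ν : ι) :
    ∑ l, g x μ l * ginv g x l ν = if μ = ν then 1 else 0 := by
  have := Matrix.mul_nonsing_inv (g x) (hg.2.2 x)
  have h2 := congrFun (congrFun this μ) ν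
  rw [Matrix.mul_apply, Matrix.one_apply] at h2
  exact h2

lemma lower_ginv {g : (ι → ℝ) → Matrix ι ι ℝ} (hg : SmoothMetric g) (x : ι → ℝ) (μ : ι)
    (X : ι → ℝ) :
    ∑ l, g x μ l * (∑ ν, ginv g x l ν * X ν) = X μ := by
  simp only [Finset.mul_sum]
  rw [Finset.sum_comm]
  simp only [← mul_assoc, ← Finset.sum_mul, sum_g_ginv hg]
  simp

lemma lower_Γ {g : (ι → ℝ) → Matrix ι ι ℝ} (hg : SmoothMetric g) (x : ι → ℝ) (μ ρ σ : ι) :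
    ∑ l, g x μ l * Γc g l ρ σ x = (1 / 2) *
      (pd (fun y => g y μ σ) ρ x + pd (fun y => g y μ ρ) σ x - pd (fun y => g y ρ σ) μ x) := by
  unfold Γc
  rw [← lower_ginv hg x μ (fun ν => (pd (fun y => g y ν σ) ρ x + pd (fun y => g y ν ρ) σ x
    - pd (fun y => g y ρ σ) ν x)), Finset.mul_sum]
  exact Finset.sum_congr rfl fun l _ => by ring

lemma pd_symm {g : (ι → ℝ) → Matrix ι ι ℝ} (hg : SmoothMetric g) (x : ι → ℝ) (μ ν ρ : ι) :
    pd (fun y => g y μ ν) ρ x = pd (fun y => g y ν μ) ρ x := by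
  congr 1
  funext y
  exact hg.2.1 y μ ν

lemma pd_metric {g : (ι → ℝ) → Matrix ι ι ℝ} (hg : SmoothMetric g) (x : ι → ℝ) (μ ν ρ : ι) :
    pd (fun y => g y μ ν) ρ x =
      ∑ l, g x ν l * Γc g l ρ μ x + ∑ l, g x μ l * Γc g l ρ ν x := by
  rw [lower_Γ hg, lower_Γ hg, pd_symm hg x ν μ, pd_symm hg x ν ρ, pd_symm hg x ρ μ]
  ring

lemma hasDerivAt_comp_curve {h : (ι → ℝ) → ℝ} {γ : ℝ → ι → ℝ} {u : ℝ}
    (hh : DifferentiableAt ℝ h (γ u)) (hγ : ∀ μ, DifferentiableAt ℝ (fun w => γ w μ) u) :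
    HasDerivAt (fun w => h (γ w)) (∑ ρ, pd h ρ (γ u) * vel γ u ρ) u := by
  have h1 : HasDerivAt γ (vel γ u) u := by
    rw [hasDerivAt_pi]
    exact fun μ => (hγ μ).hasDerivAt
  have h2 := hh.hasFDerivAt.comp_hasDerivAt u h1
  refine HasDerivAt.congr_deriv h2 ?_
  symm
  conv_rhs => rw [pi_eq_sum_univ (vel γ u)]
  rw [map_sum]
  refine Finset.sum_congr rfl fun ρ _ => ?_
  rw [map_smul, smul_eq_mul, mul_comm]
  congr 2
  unfold pd
  congr 1
  funext j
  simp [Pi.single_apply, eq_comm]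

lemma hasDerivAt_sq {g : (ι → ℝ) → Matrix ι ι ℝ} (hg : SmoothMetric g) {γ V W : ℝ → ι → ℝ}
    {u : ℝ} (hγ : ∀ μ, DifferentiableAt ℝ (fun w => γ w μ) u)
    (hV : ∀ μ, DifferentiableAt ℝ (fun w => V w μ) u)
    (hW : ∀ μ, DifferentiableAt ℝ (fun w => W w μ) u) :
    HasDerivAt (fun w => sq g (γ w) (V w) (W w))
      (sq g (γ u) (covD g γ V u) (W u) + sq g (γ u) (V u) (covD g γ W u)) u := by
  have h0 : HasDerivAt (fun w => sq g (γ w) (V w) (W w))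
      (∑ μ, ∑ ν, (((∑ ρ, pd (fun y => g y μ ν) ρ (γ u) * vel γ u ρ) * V u μ
        + g (γ u) μ ν * deriv (fun w => V w μ) u) * W u ν
        + g (γ u) μ ν * V u μ * deriv (fun w => W w ν) u)) u := by
    unfold sq
    refine HasDerivAt.fun_sum fun μ _ => HasDerivAt.fun_sum fun ν _ => ?_
    exact ((hasDerivAt_comp_curve (h := fun y => g y μ ν)
      ((hg.1 μ ν).differentiable (by simp) _) hγ).mul (hV μ).hasDerivAt).mul (hW ν).hasDerivAt
  refine HasDerivAt.congr_deriv h0 ?_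
  symm
  set C : ι → ι → ℝ := fun l μ => ∑ ρ, Γc g l ρ μ (γ u) * vel γ u ρ with hC
  have hcov : ∀ (X : ℝ → ι → ℝ) μ, covD g γ X u μ
      = deriv (fun w => X w μ) u + ∑ σ, C μ σ * X u σ := by
    intro X μ
    unfold covD
    rw [Finset.sum_comm]
    simp only [hC, Finset.sum_mul]
  have hpd : ∀ μ ν, ∑ ρ, pd (fun y => g y μ ν) ρ (γ u) * vel γ u ρ
      = ∑ l, g (γ u) ν l * C l μ + ∑ l, g (γ u) μ l * C l ν := by
    intro μ ν
    simp only [pd_metric hg, add_mul, Finset.sum_add_distrib, hC, Finset.sum_mul, Finset.mul_sum]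
    congr 1 <;> rw [Finset.sum_comm] <;> simp only [mul_assoc]
  simp only [hpd]
  unfold sq
  simp only [hcov]
  have e1 : ∑ μ, ∑ ν, g (γ u) μ ν * (∑ σ, C μ σ * V u σ) * W u ν
      = ∑ μ, ∑ ν, (∑ l, g (γ u) ν l * C l μ) * V u μ * W u ν := by
    rw [Finset.sum_comm]
    conv_rhs => rw [Finset.sum_comm]
    refine Finset.sum_congr rfl fun ν _ => ?_
    simp only [Finset.mul_sum, Finset.sum_mul]
    rw [Finset.sum_comm]
    refine Finset.sum_congr rfl fun μ _ => Finset.sum_congr rfl fun l _ => ?_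
    rw [hg.2.1 _ ν l]; ring
  have e2 : ∑ μ, ∑ ν, g (γ u) μ ν * V u μ * (∑ σ, C ν σ * W u σ)
      = ∑ μ, ∑ ν, (∑ l, g (γ u) μ l * C l ν) * V u μ * W u ν := by
    refine Finset.sum_congr rfl fun μ _ => ?_
    simp only [Finset.mul_sum, Finset.sum_mul]
    rw [Finset.sum_comm]
    refine Finset.sum_congr rfl fun ν _ => Finset.sum_congr rfl fun l _ => ?_
    ring
  simp only [mul_add, add_mul, Finset.sum_add_distrib, e1, e2]
  ring

lemma linear_ode_zero (a : ι → ι → ℝ → ℝ) (ha : ∀ μ σ, Continuous (a μ σ)) (X : ℝ → ι → ℝ)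
    (hX : ∀ u μ, HasDerivAt (fun w => X w μ) (∑ σ, a μ σ u * X u σ) u)
    (h0 : X 0 = 0) (u : ℝ) : X u = 0 := by
  let L : ℝ → (ι → ℝ) →L[ℝ] (ι → ℝ) := fun t =>
    ContinuousLinearMap.pi fun μ => ∑ σ, a μ σ t • ContinuousLinearMap.proj (R := ℝ) σ
  have hLa : ∀ t x μ, L t x μ = ∑ σ, a μ σ t * x σ := by
    intro t x μ
    simp [L]
  have hbd : ∃ K : NNReal, ∀ t ∈ Set.Ioo (-(|u| + 1)) (|u| + 1), LipschitzWith K (L t) := by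
    obtain ⟨B, hB⟩ := (isCompact_Icc (a := -(|u| + 1)) (b := |u| + 1)).exists_bound_of_continuousOn
      (f := fun t => ∑ μ, ∑ σ, |a μ σ t|)
      (Continuous.continuousOn (continuous_finsetSum _ fun μ _ => continuous_finsetSum _
        fun σ _ => (ha μ σ).abs))
    refine ⟨Real.toNNReal B, fun t ht => ?_⟩
    have hBt := hB t ⟨ht.1.le, ht.2.le⟩
    have hS : ∑ μ, ∑ σ, |a μ σ t| ≤ B := (le_abs_self _).trans hBt
    refine (AddMonoidHomClass.lipschitz_of_bound (L t) B fun x => ?_)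
    have hS0 : (0:ℝ) ≤ ∑ μ, ∑ σ, |a μ σ t| :=
      Finset.sum_nonneg fun _ _ => Finset.sum_nonneg fun _ _ => abs_nonneg _
    refine (pi_norm_le_iff_of_nonneg (mul_nonneg (hS0.trans hS) (norm_nonneg _))).2 fun μ => ?_
    rw [hLa, Real.norm_eq_abs]
    calc |∑ σ, a μ σ t * x σ| ≤ ∑ σ, |a μ σ t * x σ| := Finset.abs_sum_le_sum_abs _ _
      _ ≤ ∑ σ, |a μ σ t| * ‖x‖ := by
          refine Finset.sum_le_sum fun σ _ => ?_
          rw [abs_mul]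
          exact mul_le_mul_of_nonneg_left (norm_le_pi_norm x σ) (abs_nonneg _)
      _ = (∑ σ, |a μ σ t|) * ‖x‖ := by rw [Finset.sum_mul]
      _ ≤ B * ‖x‖ := by
          refine mul_le_mul_of_nonneg_right (le_trans ?_ hS) (norm_nonneg _)
          exact Finset.single_le_sum (f := fun μ => ∑ σ, |a μ σ t|)
            (fun _ _ => Finset.sum_nonneg fun _ _ => abs_nonneg _) (Finset.mem_univ μ)
  obtain ⟨K, hK⟩ := hbd
  have hXd : ∀ t, HasDerivAt X (L t (X t)) t := by
    intro t
    rw [hasDerivAt_pi]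
    intro μ
    rw [hLa]
    exact hX t μ
  have := ODE_solution_unique_of_mem_Ioo (v := fun t => L t) (s := fun _ => Set.univ)
    (K := K) (f := X) (g := fun _ => 0) (a := -(|u| + 1)) (b := |u| + 1) (t₀ := 0)
    (fun t ht => (hK t ht).lipschitzOnWith)
    ⟨by have := abs_nonneg u; linarith, by have := abs_nonneg u; linarith⟩
    (fun t _ => ⟨hXd t, Set.mem_univ _⟩)
    (fun t _ => ⟨by simpa using hasDerivAt_const t (0 : ι → ℝ), Set.mem_univ _⟩) h0
  have hu : u ∈ Set.Ioo (-(|u| + 1)) (|u| + 1) :=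
    ⟨by have := neg_abs_le u; linarith, by have := le_abs_self u; linarith⟩
  exact this hu

lemma parallel_unique {g : (ι → ℝ) → Matrix ι ι ℝ} (hg : SmoothMetric g) {γ V W : ℝ → ι → ℝ}
    (hγ : SmoothCurve γ) (hV : ∀ μ, Differentiable ℝ fun w => V w μ)
    (hW : ∀ μ, Differentiable ℝ fun w => W w μ)
    (pV : IsParallel g γ V) (pW : IsParallel g γ W) (h0 : V 0 = W 0) (u : ℝ) : V u = W u := by
  have hγc : Continuous γ := continuous_pi fun μ => (hγ μ).continuous
  have hvel : ∀ ρ, Continuous fun u => vel γ u ρ := by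
    intro ρ
    exact (hγ ρ).continuous_deriv (by simp)
  have key := linear_ode_zero (fun μ σ t => -∑ ρ, Γc g μ ρ σ (γ t) * vel γ t ρ)
    (fun μ σ => (continuous_finsetSum _ fun ρ _ =>
      ((contDiff_Γc hg μ ρ σ).continuous.comp hγc).mul (hvel ρ)).neg)
    (fun w μ => V w μ - W w μ) ?_ (by funext μ; simp [h0]) u
  · funext μ
    have := congrFun key μ
    simpa [sub_eq_zero] using this
  · intro t μ
    refine HasDerivAt.congr_deriv ((hV μ t).hasDerivAt.sub (hW μ t).hasDerivAt) ?_
    have h1 := pV t μ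
    have h2 := pW t μ
    unfold covD at h1 h2
    rw [Finset.sum_comm] at h1 h2
    rw [eq_neg_of_add_eq_zero_left h1, eq_neg_of_add_eq_zero_left h2]
    simp only [neg_mul, mul_sub, Finset.sum_mul, Finset.sum_neg_distrib, Finset.sum_sub_distrib]

lemma pd_neg (h : (ι → ℝ) → ℝ) (ρ : ι) (y : ι → ℝ) : pd (fun z => - h z) ρ y = - pd h ρ y := by
  unfold pd
  rw [fderiv_fun_neg]
  rfl

section Warped

variable {d₁ d₂ : ℕ} {gB : (Fin d₁ → ℝ) → Matrix (Fin d₁) (Fin d₁) ℝ}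
  {gF : (Fin d₂ → ℝ) → Matrix (Fin d₂) (Fin d₂) ℝ} {f : (Fin d₁ → ℝ) → ℝ}

lemma contDiff_basePt : ContDiff ℝ (⊤ : ℕ∞) (basePt (d₁ := d₁) (d₂ := d₂)) := by
  unfold basePt
  fun_prop

lemma contDiff_fibPt : ContDiff ℝ (⊤ : ℕ∞) (fibPt (d₁ := d₁) (d₂ := d₂)) := by
  unfold fibPt
  fun_prop

lemma hasFDerivAt_basePt (x : (Fin d₁ ⊕ Fin d₂) → ℝ) :
    HasFDerivAt (basePt (d₁ := d₁) (d₂ := d₂))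
      (ContinuousLinearMap.pi fun a => ContinuousLinearMap.proj (R := ℝ) (Sum.inl a)) x :=
  (ContinuousLinearMap.pi fun a => ContinuousLinearMap.proj (R := ℝ)
    (φ := fun _ : Fin d₁ ⊕ Fin d₂ => ℝ) (Sum.inl a)).hasFDerivAt

lemma hasFDerivAt_fibPt (x : (Fin d₁ ⊕ Fin d₂) → ℝ) :
    HasFDerivAt (fibPt (d₁ := d₁) (d₂ := d₂))
      (ContinuousLinearMap.pi fun a => ContinuousLinearMap.proj (R := ℝ) (Sum.inr a)) x :=
  (ContinuousLinearMap.pi fun a => ContinuousLinearMap.proj (R := ℝ)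
    (φ := fun _ : Fin d₁ ⊕ Fin d₂ => ℝ) (Sum.inr a)).hasFDerivAt

lemma pd_base_inl {h : (Fin d₁ → ℝ) → ℝ} {x : (Fin d₁ ⊕ Fin d₂) → ℝ}
    (hh : DifferentiableAt ℝ h (basePt x)) (b : Fin d₁) :
    pd (fun y => h (basePt y)) (Sum.inl b) x = pd h b (basePt x) := by
  unfold pd
  have := (hh.hasFDerivAt.comp x (hasFDerivAt_basePt x)).fderiv
  rw [show (fun y => h (basePt y)) = h ∘ basePt from rfl, this]
  rw [ContinuousLinearMap.comp_apply]
  congr 1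
  funext a
  simp [Pi.single_apply]

lemma pd_base_inr {h : (Fin d₁ → ℝ) → ℝ} {x : (Fin d₁ ⊕ Fin d₂) → ℝ}
    (hh : DifferentiableAt ℝ h (basePt x)) (b : Fin d₂) :
    pd (fun y => h (basePt y)) (Sum.inr b) x = 0 := by
  unfold pd
  have := (hh.hasFDerivAt.comp x (hasFDerivAt_basePt x)).fderiv
  rw [show (fun y => h (basePt y)) = h ∘ basePt from rfl, this]
  rw [ContinuousLinearMap.comp_apply]
  have h0 : (ContinuousLinearMap.pi fun a => ContinuousLinearMap.proj (R := ℝ)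
      (φ := fun _ : Fin d₁ ⊕ Fin d₂ => ℝ) (Sum.inl a)) (Pi.single (Sum.inr b) 1) = 0 := by
    funext a
    simp
  rw [h0, map_zero]

lemma pd_fib_inr {h : (Fin d₂ → ℝ) → ℝ} {x : (Fin d₁ ⊕ Fin d₂) → ℝ}
    (hh : DifferentiableAt ℝ h (fibPt x)) (b : Fin d₂) :
    pd (fun y => h (fibPt y)) (Sum.inr b) x = pd h b (fibPt x) := by
  unfold pd
  have := (hh.hasFDerivAt.comp x (hasFDerivAt_fibPt x)).fderiv
  rw [show (fun y => h (fibPt y)) = h ∘ fibPt from rfl, this]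
  rw [ContinuousLinearMap.comp_apply]
  congr 1
  funext a
  simp [Pi.single_apply]

lemma pd_fib_inl {h : (Fin d₂ → ℝ) → ℝ} {x : (Fin d₁ ⊕ Fin d₂) → ℝ}
    (hh : DifferentiableAt ℝ h (fibPt x)) (b : Fin d₁) :
    pd (fun y => h (fibPt y)) (Sum.inl b) x = 0 := by
  unfold pd
  have := (hh.hasFDerivAt.comp x (hasFDerivAt_fibPt x)).fderiv
  rw [show (fun y => h (fibPt y)) = h ∘ fibPt from rfl, this]
  rw [ContinuousLinearMap.comp_apply]
  have h0 : (ContinuousLinearMap.pi fun a => ContinuousLinearMap.proj (R := ℝ)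
      (φ := fun _ : Fin d₁ ⊕ Fin d₂ => ℝ) (Sum.inr a)) (Pi.single (Sum.inl b) 1) = 0 := by
    funext a
    simp
  rw [h0, map_zero]

lemma pd_mul {h k : (ι → ℝ) → ℝ} {x : ι → ℝ} (hh : DifferentiableAt ℝ h x)
    (hk : DifferentiableAt ℝ k x) (ρ : ι) :
    pd (fun y => h y * k y) ρ x = pd h ρ x * k x + h x * pd k ρ x := by
  unfold pd
  rw [fderiv_fun_mul hh hk]
  simp
  ring

lemma pd_const (c : ℝ) (ρ : ι) (x : ι → ℝ) : pd (fun _ => c) ρ x = 0 := by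
  simp [pd]

lemma pd_mixed_inl {h : (Fin d₁ → ℝ) → ℝ} {k : (Fin d₂ → ℝ) → ℝ} {x : (Fin d₁ ⊕ Fin d₂) → ℝ}
    (hh : DifferentiableAt ℝ h (basePt x)) (hk : DifferentiableAt ℝ k (fibPt x)) (b : Fin d₁) :
    pd (fun y => h (basePt y) * k (fibPt y)) (Sum.inl b) x = pd h b (basePt x) * k (fibPt x) := by
  rw [pd_mul (h := fun y => h (basePt y)) (k := fun y => k (fibPt y)) (hh.comp x (hasFDerivAt_basePt x).differentiableAt)
    (hk.comp x (hasFDerivAt_fibPt x).differentiableAt), pd_base_inl hh, pd_fib_inl hk]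
  simp

lemma pd_mixed_inr {h : (Fin d₁ → ℝ) → ℝ} {k : (Fin d₂ → ℝ) → ℝ} {x : (Fin d₁ ⊕ Fin d₂) → ℝ}
    (hh : DifferentiableAt ℝ h (basePt x)) (hk : DifferentiableAt ℝ k (fibPt x)) (b : Fin d₂) :
    pd (fun y => h (basePt y) * k (fibPt y)) (Sum.inr b) x = h (basePt x) * pd k b (fibPt x) := by
  rw [pd_mul (h := fun y => h (basePt y)) (k := fun y => k (fibPt y)) (hh.comp x (hasFDerivAt_basePt x).differentiableAt)
    (hk.comp x (hasFDerivAt_fibPt x).differentiableAt), pd_base_inr hh, pd_fib_inr hk]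
  simp

lemma ginv_warped (hB : SmoothMetric gB) (hF : SmoothMetric gF) (hfpos : ∀ y, 0 < f y)
    (x : (Fin d₁ ⊕ Fin d₂) → ℝ) :
    warped gB gF f x * Matrix.fromBlocks (ginv gB (basePt x)) 0 0
      (((f (basePt x)) ^ 2)⁻¹ • ginv gF (fibPt x)) = 1 := by
  have h : warped gB gF f x = Matrix.fromBlocks (gB (basePt x)) 0 0
      (((f (basePt x)) ^ 2) • gF (fibPt x)) := by
    ext μ ν
    rcases μ with a | i <;> rcases ν with b | j <;> simp [warped]
  have h2 : (f (basePt x)) ^ 2 ≠ 0 := (pow_pos (hfpos _) 2).ne'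
  rw [h, Matrix.fromBlocks_multiply]
  simp only [ginv, Matrix.mul_nonsing_inv _ (hB.2.2 _), Matrix.mul_zero, Matrix.zero_mul,
    Matrix.smul_mul, Matrix.mul_smul, Matrix.mul_nonsing_inv _ (hF.2.2 _), smul_smul, add_zero,
    zero_add, inv_mul_cancel₀ h2, smul_zero, one_smul, Matrix.fromBlocks_one]

lemma ginv_warped_eq (hB : SmoothMetric gB) (hF : SmoothMetric gF) (hfpos : ∀ y, 0 < f y)
    (x : (Fin d₁ ⊕ Fin d₂) → ℝ) :
    ginv (warped gB gF f) x = Matrix.fromBlocks (ginv gB (basePt x)) 0 0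
      (((f (basePt x)) ^ 2)⁻¹ • ginv gF (fibPt x)) :=
  Matrix.inv_eq_right_inv (ginv_warped hB hF hfpos x)

lemma smoothMetric_warped (hB : SmoothMetric gB) (hF : SmoothMetric gF)
    (hf : ContDiff ℝ (⊤ : ℕ∞) f) (hfpos : ∀ y, 0 < f y) : SmoothMetric (warped gB gF f) := by
  refine ⟨?_, ?_, fun x => ?_⟩
  · rintro (a | i) (b | j)
    · exact (hB.1 a b).comp contDiff_basePt
    · exact contDiff_const
    · exact contDiff_const
    · exact ((hf.comp contDiff_basePt).pow 2).mul ((hF.1 i j).comp contDiff_fibPt)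
  · rintro x (a | i) (b | j)
    · exact hB.2.1 _ _ _
    · rfl
    · rfl
    · simp only [warped, Matrix.of_apply, hF.2.1 _ i j]
  · exact Matrix.isUnit_det_of_right_inverse (ginv_warped hB hF hfpos x)

structure WHyp (gB : (Fin d₁ → ℝ) → Matrix (Fin d₁) (Fin d₁) ℝ)
    (gF : (Fin d₂ → ℝ) → Matrix (Fin d₂) (Fin d₂) ℝ) (f : (Fin d₁ → ℝ) → ℝ) : Prop where
  hB : SmoothMetric gB
  hF : SmoothMetric gF
  hf : ContDiff ℝ (⊤ : ℕ∞) f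
  hfpos : ∀ y, 0 < f y

section
variable (x : (Fin d₁ ⊕ Fin d₂) → ℝ)

lemma WHyp.dB (H : WHyp gB gF f) (a b : Fin d₁) (y) : DifferentiableAt ℝ (fun z => gB z a b) y :=
  (H.hB.1 a b).differentiable (by simp) y
lemma WHyp.dF (H : WHyp gB gF f) (a b : Fin d₂) (y) : DifferentiableAt ℝ (fun z => gF z a b) y :=
  (H.hF.1 a b).differentiable (by simp) y
lemma WHyp.df (H : WHyp gB gF f) (y) : DifferentiableAt ℝ f y :=
  H.hf.differentiable (by simp) y
lemma WHyp.df2 (H : WHyp gB gF f) (y) : DifferentiableAt ℝ (fun z => f z ^ 2) y := (H.df y).pow 2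

lemma WHyp.p_ll_l (H : WHyp gB gF f) (a b c : Fin d₁) :
    pd (fun y => warped gB gF f y (Sum.inl a) (Sum.inl b)) (Sum.inl c) x
      = pd (fun y => gB y a b) c (basePt x) := pd_base_inl (H.dB a b _) c
lemma WHyp.p_ll_r (H : WHyp gB gF f) (a b : Fin d₁) (c : Fin d₂) :
    pd (fun y => warped gB gF f y (Sum.inl a) (Sum.inl b)) (Sum.inr c) x
      = 0 := pd_base_inr (H.dB a b _) c
lemma WHyp.p_lr (H : WHyp gB gF f) (a : Fin d₁) (b : Fin d₂) (c) :
    pd (fun y => warped gB gF f y (Sum.inl a) (Sum.inr b)) c x = 0 := pd_const 0 c x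
lemma WHyp.p_rl (H : WHyp gB gF f) (a : Fin d₁) (b : Fin d₂) (c) :
    pd (fun y => warped gB gF f y (Sum.inr b) (Sum.inl a)) c x = 0 := pd_const 0 c x
lemma WHyp.p_rr_l (H : WHyp gB gF f) (i j : Fin d₂) (c : Fin d₁) :
    pd (fun y => warped gB gF f y (Sum.inr i) (Sum.inr j)) (Sum.inl c) x
      = 2 * f (basePt x) * pd f c (basePt x) * gF (fibPt x) i j := by
  refine (pd_mixed_inl (h := fun z => f z ^ 2) (k := fun z => gF z i j)
    (H.df2 _) (H.dF i j _) c).trans ?_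
  simp only [pow_two]
  rw [pd_mul (H.df _) (H.df _)]
  ring
lemma WHyp.p_rr_r (H : WHyp gB gF f) (i j : Fin d₂) (c : Fin d₂) :
    pd (fun y => warped gB gF f y (Sum.inr i) (Sum.inr j)) (Sum.inr c) x
      = f (basePt x) ^ 2 * pd (fun z => gF z i j) c (fibPt x) :=
  pd_mixed_inr (h := fun z => f z ^ 2) (k := fun z => gF z i j) (H.df2 _) (H.dF i j _) c

lemma WHyp.Γ_lll (H : WHyp gB gF f) (a b c : Fin d₁) :
    Γc (warped gB gF f) (Sum.inl a) (Sum.inl b) (Sum.inl c) x = Γc gB a b c (basePt x) := by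
  unfold Γc
  simp [ginv_warped_eq H.hB H.hF H.hfpos, Fintype.sum_sum_type, H.p_ll_l, H.p_rl, H.p_ll_r]

lemma WHyp.Γ_llr (H : WHyp gB gF f) (a b : Fin d₁) (c : Fin d₂) :
    Γc (warped gB gF f) (Sum.inl a) (Sum.inl b) (Sum.inr c) x = 0 := by
  unfold Γc
  simp [ginv_warped_eq H.hB H.hF H.hfpos, Fintype.sum_sum_type, H.p_lr, H.p_ll_r]

lemma WHyp.Γ_lrl (H : WHyp gB gF f) (a b : Fin d₁) (c : Fin d₂) :
    Γc (warped gB gF f) (Sum.inl a) (Sum.inr c) (Sum.inl b) x = 0 := by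
  unfold Γc
  simp [ginv_warped_eq H.hB H.hF H.hfpos, Fintype.sum_sum_type, H.p_lr, H.p_rl, H.p_ll_r]

lemma WHyp.Γ_lrr (H : WHyp gB gF f) (a : Fin d₁) (i j : Fin d₂) :
    Γc (warped gB gF f) (Sum.inl a) (Sum.inr i) (Sum.inr j) x
      = - (f (basePt x) * gradVec gB f (basePt x) a) * gF (fibPt x) i j := by
  unfold Γc gradVec
  simp only [ginv_warped_eq H.hB H.hF H.hfpos, Fintype.sum_sum_type, H.p_lr, H.p_rr_l,
    Matrix.fromBlocks_apply₁₁, Matrix.fromBlocks_apply₁₂, Matrix.zero_apply, zero_mul,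
    Finset.sum_const_zero, add_zero, zero_sub, mul_neg, Finset.sum_neg_distrib, Finset.mul_sum,
    Finset.sum_mul, neg_mul]
  congr 1
  exact Finset.sum_congr rfl fun _ _ => by ring

lemma WHyp.Γ_rll (H : WHyp gB gF f) (i : Fin d₂) (b c : Fin d₁) :
    Γc (warped gB gF f) (Sum.inr i) (Sum.inl b) (Sum.inl c) x = 0 := by
  unfold Γc
  simp [ginv_warped_eq H.hB H.hF H.hfpos, Fintype.sum_sum_type, H.p_rl, H.p_ll_r]

lemma WHyp.Γ_rlr (H : WHyp gB gF f) (i j : Fin d₂) (b : Fin d₁) :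
    Γc (warped gB gF f) (Sum.inr i) (Sum.inl b) (Sum.inr j) x
      = (f (basePt x))⁻¹ * pd f b (basePt x) * if i = j then 1 else 0 := by
  have h2 : f (basePt x) ≠ 0 := (H.hfpos _).ne'
  have h3 : ∑ l, ginv gF (fibPt x) i l * gF (fibPt x) l j = if i = j then 1 else 0 := by
    have h4 := congrFun (congrFun (Matrix.nonsing_inv_mul (gF (fibPt x)) (H.hF.2.2 _)) i) j
    rw [Matrix.mul_apply, Matrix.one_apply] at h4
    exact h4
  rw [← h3]
  unfold Γc
  simp only [ginv_warped_eq H.hB H.hF H.hfpos, Fintype.sum_sum_type, H.p_lr, H.p_rl, H.p_rr_l,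
    Matrix.fromBlocks_apply₂₁, Matrix.fromBlocks_apply₂₂, Matrix.zero_apply, zero_mul,
    Finset.sum_const_zero, add_zero, zero_add, sub_zero, Finset.mul_sum, Matrix.smul_apply,
    smul_eq_mul]
  exact Finset.sum_congr rfl fun _ _ => by field_simp

lemma WHyp.Γ_rrl (H : WHyp gB gF f) (i j : Fin d₂) (b : Fin d₁) :
    Γc (warped gB gF f) (Sum.inr i) (Sum.inr j) (Sum.inl b) x
      = (f (basePt x))⁻¹ * pd f b (basePt x) * if i = j then 1 else 0 := by
  rw [← H.Γ_rlr]
  unfold Γc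
  simp only [ginv_warped_eq H.hB H.hF H.hfpos, Fintype.sum_sum_type, H.p_lr, H.p_rl,
    Matrix.fromBlocks_apply₂₁, Matrix.zero_apply, zero_mul,
    Finset.sum_const_zero, add_zero, zero_add]

lemma WHyp.Γ_rrr (H : WHyp gB gF f) (i j k : Fin d₂) :
    Γc (warped gB gF f) (Sum.inr i) (Sum.inr j) (Sum.inr k) x = Γc gF i j k (fibPt x) := by
  have h2 : f (basePt x) ≠ 0 := (H.hfpos _).ne'
  unfold Γc
  simp only [ginv_warped_eq H.hB H.hF H.hfpos, Fintype.sum_sum_type, H.p_rr_r,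
    Matrix.fromBlocks_apply₂₁, Matrix.fromBlocks_apply₂₂, Matrix.zero_apply, zero_mul,
    Finset.sum_const_zero, zero_add, Finset.mul_sum, Matrix.smul_apply,
    smul_eq_mul]
  exact Finset.sum_congr rfl fun _ _ => by field_simp


/-- Covariant derivative `∇_b f^a` of the gradient. -/
def cg (gB : (Fin d₁ → ℝ) → Matrix (Fin d₁) (Fin d₁) ℝ) (f : (Fin d₁ → ℝ) → ℝ) (a b : Fin d₁)
    (y : Fin d₁ → ℝ) : ℝ :=
  pd (fun z => gradVec gB f z a) b y + ∑ c, Γc gB a b c y * gradVec gB f y c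

lemma WHyp.dgrad (H : WHyp gB gF f) (a : Fin d₁) (y) : DifferentiableAt ℝ (fun z => gradVec gB f z a) y :=
  (contDiff_gradVec H.hB H.hf a).differentiable (by simp) y

lemma WHyp.dfgrad (H : WHyp gB gF f) (a : Fin d₁) (y) :
    DifferentiableAt ℝ (fun z => -(f z * gradVec gB f z a)) y :=
  ((H.df y).mul (H.dgrad a y)).neg

lemma WHyp.fΓ_lrr (H : WHyp gB gF f) (a : Fin d₁) (i j : Fin d₂) :
    Γc (warped gB gF f) (Sum.inl a) (Sum.inr i) (Sum.inr j) = fun x =>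
      (fun z => - (f z * gradVec gB f z a)) (basePt x) * (fun z => gF z i j) (fibPt x) :=
  funext fun x => H.Γ_lrr x a i j

lemma WHyp.fΓ_rlr (H : WHyp gB gF f) (i j : Fin d₂) (b : Fin d₁) :
    Γc (warped gB gF f) (Sum.inr i) (Sum.inl b) (Sum.inr j) = fun x =>
      (fun z => (f z)⁻¹ * pd f b z * if i = j then 1 else 0) (basePt x) :=
  funext fun x => H.Γ_rlr x i j b

lemma WHyp.fΓ_rrr (H : WHyp gB gF f) (i j k : Fin d₂) :
    Γc (warped gB gF f) (Sum.inr i) (Sum.inr j) (Sum.inr k) = fun x => Γc gF i j k (fibPt x) :=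
  funext fun x => H.Γ_rrr x i j k

lemma WHyp.fΓ_llr (H : WHyp gB gF f) (a b : Fin d₁) (j : Fin d₂) :
    Γc (warped gB gF f) (Sum.inl a) (Sum.inl b) (Sum.inr j) = fun _ => 0 :=
  funext fun x => H.Γ_llr x a b j

lemma WHyp.Riem1 (H : WHyp gB gF f) (a b : Fin d₁) (j l : Fin d₂) :
    Riem (warped gB gF f) (Sum.inl a) (Sum.inr j) (Sum.inl b) (Sum.inr l) x
      = - (f (basePt x) * cg gB f a b (basePt x)) * gF (fibPt x) l j := by
  have hne : f (basePt x) ≠ 0 := (H.hfpos _).ne'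
  unfold Riem
  rw [H.fΓ_lrr, H.fΓ_llr, pd_const, pd_mixed_inl (H.dfgrad a _) (H.dF l j _), pd_neg,
    pd_mul (H.df _) (H.dgrad a _)]
  simp only [Fintype.sum_sum_type, H.Γ_lll, H.Γ_lrr, H.Γ_llr, H.Γ_lrl, H.Γ_rlr, mul_ite, mul_one,
    mul_zero, Finset.sum_ite_eq', Finset.mem_univ, if_true, zero_mul, Finset.sum_const_zero,
    add_zero, zero_add]
  have e : ∑ c, Γc gB a b c (basePt x) * (-(f (basePt x) * gradVec gB f (basePt x) c)
        * gF (fibPt x) l j)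
      = - (f (basePt x) * ∑ c, Γc gB a b c (basePt x) * gradVec gB f (basePt x) c)
        * gF (fibPt x) l j := by
    rw [Finset.mul_sum, ← Finset.sum_neg_distrib, Finset.sum_mul]
    exact Finset.sum_congr rfl fun c _ => by ring
  rw [e]
  unfold cg
  field_simp
  ring

lemma WHyp.Riem2 (H : WHyp gB gF f) (a : Fin d₁) (j k l : Fin d₂) :
    Riem (warped gB gF f) (Sum.inl a) (Sum.inr j) (Sum.inr k) (Sum.inr l) x = 0 := by
  unfold Riem
  rw [H.fΓ_lrr, H.fΓ_lrr, pd_mixed_inr (H.dfgrad a _) (H.dF _ _ _),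
    pd_mixed_inr (H.dfgrad a _) (H.dF _ _ _)]
  simp only [Fintype.sum_sum_type, H.Γ_lrr, H.Γ_lrl, H.Γ_rrr, zero_mul, Finset.sum_const_zero,
    zero_add, mul_assoc, ← Finset.mul_sum, lower_Γ H.hF]
  rw [pd_symm H.hF _ l k]
  ring

lemma WHyp.Riem3 (H : WHyp gB gF f) (b : Fin d₁) (i j l : Fin d₂) :
    Riem (warped gB gF f) (Sum.inr i) (Sum.inr j) (Sum.inl b) (Sum.inr l) x = 0 := by
  have hd : DifferentiableAt ℝ (fun z => (f z)⁻¹ * pd f b z * if i = j then (1:ℝ) else 0)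
      (basePt x) :=
    ((((H.df _).inv (H.hfpos _).ne').mul
      ((contDiff_pd H.hf b).differentiable (by simp) _)).mul_const _)
  unfold Riem
  rw [H.fΓ_rrr, H.fΓ_rlr, pd_base_inr hd,
    pd_fib_inl ((contDiff_Γc H.hF i l j).differentiable (by simp) _)]
  simp only [Fintype.sum_sum_type, H.Γ_rll, H.Γ_llr, H.Γ_rlr, H.Γ_rrr, mul_ite, mul_one, ite_mul,
    mul_zero, Finset.sum_ite_eq', Finset.sum_ite_eq, Finset.mem_univ, if_true, zero_mul,
    Finset.sum_const_zero, add_zero, zero_add]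
  ring

lemma WHyp.Riem4 (H : WHyp gB gF f) (i j k l : Fin d₂) :
    Riem (warped gB gF f) (Sum.inr i) (Sum.inr j) (Sum.inr k) (Sum.inr l) x
      = Riem gF i j k l (fibPt x) - (∑ a, pd f a (basePt x) * gradVec gB f (basePt x) a) *
        ((if i = k then 1 else 0) * gF (fibPt x) l j
          - (if i = l then 1 else 0) * gF (fibPt x) k j) := by
  have hne : f (basePt x) ≠ 0 := (H.hfpos _).ne'
  unfold Riem
  rw [H.fΓ_rrr, H.fΓ_rrr,
    pd_fib_inr ((contDiff_Γc H.hF i l j).differentiable (by simp) _),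
    pd_fib_inr ((contDiff_Γc H.hF i k j).differentiable (by simp) _)]
  have e : ∀ k l : Fin d₂, ∑ c, (f (basePt x))⁻¹ * pd f c (basePt x) * (if i = k then 1 else 0)
        * (-(f (basePt x) * gradVec gB f (basePt x) c) * gF (fibPt x) l j)
      = - (∑ a, pd f a (basePt x) * gradVec gB f (basePt x) a) *
        ((if i = k then 1 else 0) * gF (fibPt x) l j) := by
    intro k l
    rw [← Finset.sum_neg_distrib, Finset.sum_mul]
    exact Finset.sum_congr rfl fun c _ => by field_simp
  simp only [Fintype.sum_sum_type, H.Γ_rrl, H.Γ_rrr, H.Γ_lrr, e]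
  ring

lemma WHyp.RL1 (H : WHyp gB gF f) (a b : Fin d₁) (j l : Fin d₂) :
    RiemLow (warped gB gF f) (Sum.inl a) (Sum.inr j) (Sum.inl b) (Sum.inr l) x
      = - (f (basePt x) * ∑ d, gB (basePt x) a d * cg gB f d b (basePt x)) * gF (fibPt x) l j := by
  unfold RiemLow
  simp only [Fintype.sum_sum_type, H.Riem1, H.Riem3, mul_zero, Finset.sum_const_zero, add_zero]
  rw [Finset.mul_sum, ← Finset.sum_neg_distrib, Finset.sum_mul]
  exact Finset.sum_congr rfl fun c _ => by simp only [warped, Matrix.of_apply]; ring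

lemma WHyp.RL2 (H : WHyp gB gF f) (a : Fin d₁) (j k l : Fin d₂) :
    RiemLow (warped gB gF f) (Sum.inl a) (Sum.inr j) (Sum.inr k) (Sum.inr l) x = 0 := by
  unfold RiemLow
  simp [Fintype.sum_sum_type, H.Riem2, warped]

lemma WHyp.RL3 (H : WHyp gB gF f) (b : Fin d₁) (i j l : Fin d₂) :
    RiemLow (warped gB gF f) (Sum.inr i) (Sum.inr j) (Sum.inl b) (Sum.inr l) x = 0 := by
  unfold RiemLow
  simp [Fintype.sum_sum_type, H.Riem3, warped]

lemma WHyp.RL4 (H : WHyp gB gF f) (i j k l : Fin d₂) :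
    RiemLow (warped gB gF f) (Sum.inr i) (Sum.inr j) (Sum.inr k) (Sum.inr l) x
      = f (basePt x) ^ 2 * (RiemLow gF i j k l (fibPt x)
        - (∑ a, pd f a (basePt x) * gradVec gB f (basePt x) a) *
        (gF (fibPt x) i k * gF (fibPt x) l j - gF (fibPt x) i l * gF (fibPt x) k j)) := by
  unfold RiemLow
  simp only [Fintype.sum_sum_type, H.Riem2, H.Riem4, mul_zero, Finset.sum_const_zero, zero_add]
  set G := ∑ a, pd f a (basePt x) * gradVec gB f (basePt x) a
  simp only [warped, Matrix.of_apply]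
  have e1 : ∀ k, gF (fibPt x) i k = ∑ m, gF (fibPt x) i m * if m = k then 1 else 0 := by
    intro k; simp
  conv_rhs => rw [e1 k, e1 l]
  simp only [Finset.sum_mul, Finset.mul_sum, ← Finset.sum_sub_distrib]
  refine Finset.sum_congr rfl fun m _ => ?_
  ring

lemma WHyp.contract (H : WHyp gB gF f) (N V : (Fin d₁ ⊕ Fin d₂) → ℝ) (v : Fin d₂ → ℝ)
    (hV : ∀ a, V (Sum.inl a) = 0) (hv : ∀ i, V (Sum.inr i) = v i) :
    ∑ μ, ∑ ν, ∑ ρ, ∑ σ, RiemLow (warped gB gF f) μ ν ρ σ x * N μ * N ρ * (V ν * V σ)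
      = f (basePt x) ^ 2 * (∑ i, ∑ j, ∑ k, ∑ l, RiemLow gF i j k l (fibPt x)
            * fibPt N i * v j * fibPt N k * v l)
        - f (basePt x) ^ 2 * (∑ a, pd f a (basePt x) * gradVec gB f (basePt x) a) *
          (sq gF (fibPt x) (fibPt N) (fibPt N) * sq gF (fibPt x) v v
            - sq gF (fibPt x) (fibPt N) v * sq gF (fibPt x) (fibPt N) v)
        - f (basePt x) * (sq gB (basePt x) (basePt N)
            (fun d => ∑ b, cg gB f d b (basePt x) * basePt N b)) * sq gF (fibPt x) v v := by
  simp only [Fintype.sum_sum_type, hV, hv, zero_mul, mul_zero, Finset.sum_const_zero, zero_add,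
    add_zero, H.RL1, H.RL2, H.RL3, H.RL4]
  set G := ∑ a, pd f a (basePt x) * gradVec gB f (basePt x) a
  set y := fibPt x
  set z := basePt x
  have hN : ∀ i, N (Sum.inr i) = fibPt N i := fun _ => rfl
  have hN' : ∀ i, N (Sum.inl i) = basePt N i := fun _ => rfl
  simp only [hN, hN']
  set n := fibPt N
  set m := basePt N
  have hs := fun i j => H.hF.2.1 y i j
  have e1 : ∑ a, ∑ j, ∑ b, ∑ l, -(f z * ∑ d, gB z a d * cg gB f d b z) * gF y l j * m a * m b
        * (v j * v l)
      = - (f z * (sq gB z m (fun d => ∑ b, cg gB f d b z * m b)) * sq gF y v v) := by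
    have e2 : sq gB z m (fun d => ∑ b, cg gB f d b z * m b)
        = ∑ a, ∑ b, (∑ d, gB z a d * cg gB f d b z) * m a * m b := by
      unfold sq
      refine Finset.sum_congr rfl fun a _ => ?_
      simp only [Finset.mul_sum, Finset.sum_mul]
      rw [Finset.sum_comm]
      exact Finset.sum_congr rfl fun b _ => Finset.sum_congr rfl fun d _ => by ring
    rw [e2]
    generalize hK : (fun a b => ∑ d, gB z a d * cg gB f d b z) = K
    have hK' : ∀ a b, ∑ d, gB z a d * cg gB f d b z = K a b := fun a b => by rw [← hK]
    simp only [hK']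
    have e5 : ∀ S q : ℝ, - (f z * S * q) = S * (-(f z) * q) := fun S q => by ring
    rw [e5, Finset.sum_mul]
    refine Finset.sum_congr rfl fun a _ => ?_
    rw [Finset.sum_comm, Finset.sum_mul]
    refine Finset.sum_congr rfl fun b _ => ?_
    unfold sq
    simp only [Finset.mul_sum]
    refine Finset.sum_congr rfl fun j _ => ?_
    refine Finset.sum_congr rfl fun l _ => ?_
    rw [hs l j]
    ring
  have e3 : sq gF y n n * sq gF y v v
      = ∑ i, ∑ j, ∑ k, ∑ l, gF y i k * gF y l j * n i * n k * (v j * v l) := by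
    unfold sq
    rw [Finset.sum_mul]
    refine Finset.sum_congr rfl fun i _ => ?_
    rw [Finset.mul_sum]
    refine Finset.sum_congr rfl fun j _ => ?_
    rw [Finset.sum_mul]
    refine Finset.sum_congr rfl fun k _ => ?_
    rw [Finset.mul_sum]
    refine Finset.sum_congr rfl fun l _ => ?_
    rw [hs l j]
    ring
  have e4 : sq gF y n v * sq gF y n v
      = ∑ i, ∑ j, ∑ k, ∑ l, gF y i l * gF y k j * n i * n k * (v j * v l) := by
    unfold sq
    rw [Finset.sum_mul]
    refine Finset.sum_congr rfl fun i _ => ?_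
    rw [Finset.mul_sum, Finset.sum_comm]
    conv_lhs =>
      enter [2, j]
    rw [Finset.sum_comm]
    simp only [Finset.sum_mul, Finset.mul_sum]
    rw [Finset.sum_comm]
    refine Finset.sum_congr rfl fun j _ => ?_
    refine Finset.sum_congr rfl fun k _ => ?_
    refine Finset.sum_congr rfl fun l _ => ?_
    ring
  rw [e1, e3, e4]
  simp only [Finset.mul_sum, ← Finset.sum_sub_distrib]
  rw [add_comm, sub_eq_add_neg]
  congr 1
  refine Finset.sum_congr rfl fun i _ => ?_
  refine Finset.sum_congr rfl fun j _ => ?_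
  refine Finset.sum_congr rfl fun k _ => ?_
  refine Finset.sum_congr rfl fun l _ => ?_
  ring

lemma WHyp.covD_inl (H : WHyp gB gF f) {γ V : ℝ → (Fin d₁ ⊕ Fin d₂) → ℝ} (u : ℝ) (a : Fin d₁) :
    covD (warped gB gF f) γ V u (Sum.inl a)
      = covD gB (baseCurve γ) (fun w => basePt (V w)) u a
        - f (basePt (γ u)) * gradVec gB f (basePt (γ u)) a
          * sq gF (fibPt (γ u)) (vel (fibCurve γ) u) (fibPt (V u)) := by
  unfold covD sq
  simp only [Fintype.sum_sum_type, H.Γ_lll, H.Γ_llr, H.Γ_lrl, H.Γ_lrr, zero_mul,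
    Finset.sum_const_zero, add_zero, zero_add]
  rw [sub_eq_add_neg, ← add_assoc]
  congr 1
  rw [Finset.mul_sum, ← Finset.sum_neg_distrib]
  refine Finset.sum_congr rfl fun i _ => ?_
  rw [Finset.mul_sum, ← Finset.sum_neg_distrib]
  refine Finset.sum_congr rfl fun j _ => ?_
  simp only [fibPt, vel, fibCurve]
  ring

lemma WHyp.covD_inr (H : WHyp gB gF f) {γ V : ℝ → (Fin d₁ ⊕ Fin d₂) → ℝ} (u : ℝ) (i : Fin d₂) :
    covD (warped gB gF f) γ V u (Sum.inr i)
      = covD gF (fibCurve γ) (fun w => fibPt (V w)) u i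
        + (f (basePt (γ u)))⁻¹ * (∑ a, pd f a (basePt (γ u)) * vel (baseCurve γ) u a)
          * fibPt (V u) i
        + (f (basePt (γ u)))⁻¹ * (∑ a, pd f a (basePt (γ u)) * basePt (V u) a)
          * vel (fibCurve γ) u i := by
  unfold covD
  simp only [Fintype.sum_sum_type, H.Γ_rll, H.Γ_rlr, H.Γ_rrl, H.Γ_rrr, zero_mul,
    Finset.sum_const_zero, add_zero, zero_add, mul_ite, mul_one, mul_zero, ite_mul,
    Finset.sum_ite_eq, Finset.mem_univ, if_true, Finset.sum_add_distrib]
  have e1 : ∑ a, (f (basePt (γ u)))⁻¹ * pd f a (basePt (γ u)) * vel γ u (Sum.inl a)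
        * V u (Sum.inr i)
      = (f (basePt (γ u)))⁻¹ * (∑ a, pd f a (basePt (γ u)) * vel (baseCurve γ) u a)
          * fibPt (V u) i := by
    rw [Finset.mul_sum, Finset.sum_mul]
    refine Finset.sum_congr rfl fun a _ => ?_
    simp only [fibPt, vel, baseCurve, basePt]
    ring
  have e2 : ∑ j, ∑ a, (if i = j then (f (basePt (γ u)))⁻¹ * pd f a (basePt (γ u))
        * vel γ u (Sum.inr j) * V u (Sum.inl a) else 0)
      = (f (basePt (γ u)))⁻¹ * (∑ a, pd f a (basePt (γ u)) * basePt (V u) a)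
          * vel (fibCurve γ) u i := by
    rw [Finset.sum_comm, Finset.mul_sum, Finset.sum_mul]
    refine Finset.sum_congr rfl fun a _ => ?_
    simp only [Finset.sum_ite_eq, Finset.mem_univ, if_true, fibPt, vel, fibCurve, basePt]
    ring
  rw [e1, e2]
  simp only [fibPt, vel, fibCurve]
  ring

lemma sq_warped_fib (N V : (Fin d₁ ⊕ Fin d₂) → ℝ) (hV : ∀ a, V (Sum.inl a) = 0) :
    sq (warped gB gF f) x N V = f (basePt x) ^ 2 * sq gF (fibPt x) (fibPt N) (fibPt V) := by
  unfold sq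
  simp only [Fintype.sum_sum_type, hV, mul_zero, Finset.sum_const_zero, zero_add, warped,
    Matrix.of_apply, zero_mul, Finset.mul_sum, fibPt]
  exact Finset.sum_congr rfl fun i _ => Finset.sum_congr rfl fun j _ => by ring

end
end Warped

lemma covD_smul {g : (ι → ℝ) → Matrix ι ι ℝ} {γ V : ℝ → ι → ℝ} {s : ℝ → ℝ} {s' u : ℝ}
    (hs : HasDerivAt s s' u) (hV : ∀ μ, DifferentiableAt ℝ (fun w => V w μ) u) (μ : ι) :
    covD g γ (fun w i => s w * V w i) u μ = s' * V u μ + s u * covD g γ V u μ := by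
  unfold covD
  have h := (hs.mul (hV μ).hasDerivAt).deriv
  have h' : deriv (fun w => s w * V w μ) u = s' * V u μ + s u * deriv (fun w => V w μ) u := h
  rw [h', mul_add, Finset.mul_sum]
  simp only [Finset.mul_sum]
  rw [add_assoc]
  congr 2
  exact Finset.sum_congr rfl fun i _ => Finset.sum_congr rfl fun j _ => by ring

lemma sq_smul_left (g : (ι → ℝ) → Matrix ι ι ℝ) (x v w : ι → ℝ) (c : ℝ) :
    sq g x (fun i => c * v i) w = c * sq g x v w := by
  unfold sq
  simp only [Finset.mul_sum]
  exact Finset.sum_congr rfl fun i _ => Finset.sum_congr rfl fun j _ => by ring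

lemma sq_smul_right (g : (ι → ℝ) → Matrix ι ι ℝ) (x v w : ι → ℝ) (c : ℝ) :
    sq g x v (fun i => c * w i) = c * sq g x v w := by
  unfold sq
  simp only [Finset.mul_sum]
  exact Finset.sum_congr rfl fun i _ => Finset.sum_congr rfl fun j _ => by ring

lemma sq_zero_left (g : (ι → ℝ) → Matrix ι ι ℝ) (x v w : ι → ℝ) (hv : ∀ i, v i = 0) :
    sq g x v w = 0 := by
  simp [sq, hv]

lemma sq_zero_right (g : (ι → ℝ) → Matrix ι ι ℝ) (x v w : ι → ℝ) (hw : ∀ i, w i = 0) :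
    sq g x v w = 0 := by
  simp [sq, hw]

lemma sq_parallel_const {g : (ι → ℝ) → Matrix ι ι ℝ} (hg : SmoothMetric g)
    {γ V W : ℝ → ι → ℝ} (hγ : ∀ μ, Differentiable ℝ fun w => γ w μ)
    (hV : ∀ μ, Differentiable ℝ fun w => V w μ) (hW : ∀ μ, Differentiable ℝ fun w => W w μ)
    (pV : IsParallel g γ V) (pW : IsParallel g γ W) (u : ℝ) :
    sq g (γ u) (V u) (W u) = sq g (γ 0) (V 0) (W 0) := by
  have h : ∀ t, HasDerivAt (fun w => sq g (γ w) (V w) (W w)) 0 t := by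
    intro t
    refine (hasDerivAt_sq hg (fun μ => hγ μ t) (fun μ => hV μ t) (fun μ => hW μ t)).congr_deriv ?_
    rw [sq_zero_left _ _ _ _ (pV t), sq_zero_right _ _ _ _ (pW t), add_zero]
  exact is_const_of_deriv_eq_zero (fun t => (h t).differentiableAt) (fun t => (h t).deriv) u 0

section
variable {d₁ d₂ : ℕ} {gB : (Fin d₁ → ℝ) → Matrix (Fin d₁) (Fin d₁) ℝ}
  {gF : (Fin d₂ → ℝ) → Matrix (Fin d₂) (Fin d₂) ℝ} {f : (Fin d₁ → ℝ) → ℝ}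

lemma WHyp.second_deriv (H : WHyp gB gF f) {γ : ℝ → (Fin d₁ ⊕ Fin d₂) → ℝ} (hγ : SmoothCurve γ)
    (hgeo : IsGeodesic (warped gB gF f) γ) (u : ℝ) :
    deriv (fun w => deriv (fun w' => f (basePt (γ w'))) w) u
      = f (basePt (γ u)) * sq gF (fibPt (γ u)) (vel (fibCurve γ) u) (vel (fibCurve γ) u)
          * (∑ a, pd f a (basePt (γ u)) * gradVec gB f (basePt (γ u)) a)
        + sq gB (basePt (γ u)) (vel (baseCurve γ) u)
            (fun d => ∑ b, cg gB f d b (basePt (γ u)) * vel (baseCurve γ) u b) := by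
  have hbd : ∀ a, Differentiable ℝ fun w => baseCurve γ w a :=
    fun a => (hγ (Sum.inl a)).differentiable (by simp)
  have hvd : ∀ a, Differentiable ℝ fun w => vel (baseCurve γ) w a := fun a =>
    ((contDiff_infty_iff_deriv.1 (hγ (Sum.inl a))).2).differentiable (by simp)
  have hgd : ∀ a t, HasDerivAt (fun w => gradVec gB f (baseCurve γ w) a)
      (∑ b, pd (fun z => gradVec gB f z a) b (baseCurve γ t) * vel (baseCurve γ) t b) t :=
    fun a t => hasDerivAt_comp_curve (h := fun z => gradVec gB f z a) (H.dgrad a _)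
      (fun b => hbd b t)
  have hlow : ∀ y a, ∑ d, gB y a d * gradVec gB f y d = pd f a y :=
    fun y a => lower_ginv H.hB y a (fun ν => pd f ν y)
  have h1 : (fun w => deriv (fun w' => f (basePt (γ w'))) w)
      = fun w => sq gB (baseCurve γ w) (vel (baseCurve γ) w) (gradVec gB f (baseCurve γ w)) := by
    funext w
    have := (hasDerivAt_comp_curve (h := f) (γ := baseCurve γ) (u := w) (H.df _)
      (fun a => hbd a w)).deriv
    refine this.trans ?_
    unfold sq
    refine Finset.sum_congr rfl fun a _ => ?_
    rw [← hlow, Finset.sum_mul]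
    exact Finset.sum_congr rfl fun d _ => by ring
  rw [h1, (hasDerivAt_sq H.hB (fun a => hbd a u) (fun a => hvd a u)
    (fun a => (hgd a u).differentiableAt)).deriv]
  have h2 : covD gB (baseCurve γ) (vel (baseCurve γ)) u = fun a =>
      (f (basePt (γ u)) * sq gF (fibPt (γ u)) (vel (fibCurve γ) u) (vel (fibCurve γ) u))
        * gradVec gB f (basePt (γ u)) a := by
    funext a
    have h3 := hgeo u (Sum.inl a)
    rw [H.covD_inl] at h3
    have h4 := sub_eq_zero.1 h3
    refine Eq.trans h4 ?_
    rw [mul_right_comm]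
    rfl
  have h3 : covD gB (baseCurve γ) (fun w => gradVec gB f (baseCurve γ w)) u = fun d =>
      ∑ b, cg gB f d b (basePt (γ u)) * vel (baseCurve γ) u b := by
    funext d
    unfold covD cg
    rw [(hgd d u).deriv]
    simp only [add_mul, Finset.sum_add_distrib, Finset.sum_mul]
    congr 1
    exact Finset.sum_congr rfl fun i _ => Finset.sum_congr rfl fun j _ => by
      simp only [baseCurve]; ring
  rw [h2, h3, sq_smul_left]
  congr 2
  unfold sq
  rw [show baseCurve γ u = basePt (γ u) from rfl, Finset.sum_congr rfl]
  intro a _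
  rw [← hlow, Finset.sum_mul]
  exact Finset.sum_congr rfl fun d _ => by ring

lemma WHyp.parallel_form (H : WHyp gB gF f) {γ : ℝ → (Fin d₁ ⊕ Fin d₂) → ℝ} (hγ : SmoothCurve γ)
    (hgeo : IsGeodesic (warped gB gF f) γ) {E : ℝ → (Fin d₁ ⊕ Fin d₂) → ℝ} (hE : SmoothCurve E)
    (pE : IsParallel (warped gB gF f) γ E) (hE0 : ∀ a, E 0 (Sum.inl a) = 0)
    (hEE : sq (warped gB gF f) (γ 0) (E 0) (E 0) = 1)
    (hNE : sq (warped gB gF f) (γ 0) (vel γ 0) (E 0) = 0)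
    {W : ℝ → Fin d₂ → ℝ} (hW : SmoothCurve W) (pW : IsParallel gF (fibCurve γ) W)
    (hW0 : ∀ i, W 0 i = f (basePt (γ 0)) * E 0 (Sum.inr i)) (u : ℝ) :
    sq gF (fibPt (γ u)) (vel (fibCurve γ) u) (W u) = 0 ∧ sq gF (fibPt (γ u)) (W u) (W u) = 1 ∧
      (∀ a, E u (Sum.inl a) = 0) ∧
      ∀ i, E u (Sum.inr i) = (f (basePt (γ u)))⁻¹ * W u i := by
  have hbd : ∀ a, Differentiable ℝ fun w => baseCurve γ w a :=
    fun a => (hγ (Sum.inl a)).differentiable (by simp)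
  have hfd : ∀ a, Differentiable ℝ fun w => fibCurve γ w a :=
    fun a => (hγ (Sum.inr a)).differentiable (by simp)
  have hvd : ∀ a, Differentiable ℝ fun w => vel (fibCurve γ) w a := fun a =>
    ((contDiff_infty_iff_deriv.1 (hγ (Sum.inr a))).2).differentiable (by simp)
  have hWd : ∀ a, Differentiable ℝ fun w => W w a := fun a => (hW a).differentiable (by simp)
  have hne : ∀ t, f (basePt (γ t)) ≠ 0 := fun t => (H.hfpos _).ne'
  have hφ : ∀ t, HasDerivAt (fun w => f (basePt (γ w)))
      (∑ a, pd f a (basePt (γ t)) * vel (baseCurve γ) t a) t :=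
    fun t => hasDerivAt_comp_curve (h := f) (γ := baseCurve γ) (H.df _) (fun a => hbd a t)
  -- `f² N̄` is parallel in the fiber
  have pM : IsParallel gF (fibCurve γ)
      (fun w i => f (basePt (γ w)) ^ 2 * vel (fibCurve γ) w i) := by
    intro t i
    rw [covD_smul (s := fun w => f (basePt (γ w)) ^ 2) ((hφ t).pow 2) (fun a => hvd a t)]
    have h3 := hgeo t (Sum.inr i)
    rw [H.covD_inr] at h3
    have h4 : covD gF (fibCurve γ) (vel (fibCurve γ)) t i
        + (f (basePt (γ t)))⁻¹ * (∑ a, pd f a (basePt (γ t)) * vel (baseCurve γ) t a)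
          * vel (fibCurve γ) t i
        + (f (basePt (γ t)))⁻¹ * (∑ a, pd f a (basePt (γ t)) * vel (baseCurve γ) t a)
          * vel (fibCurve γ) t i = 0 := h3
    have h5 := hne t
    generalize covD gF (fibCurve γ) (vel (fibCurve γ)) t i = c at h4 ⊢
    generalize (∑ a, pd f a (basePt (γ t)) * vel (baseCurve γ) t a) = φ at h4 ⊢
    field_simp at h4
    push_cast
    linear_combination f (basePt (γ t)) * h4
  have hMW : ∀ t, sq gF (fibPt (γ t)) (vel (fibCurve γ) t) (W t) = 0 := by
    intro t
    have h := sq_parallel_const H.hF hfd (V := fun w i => f (basePt (γ w)) ^ 2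
      * vel (fibCurve γ) w i) (fun a => (fun t => ((hφ t).differentiableAt.pow 2).mul (hvd a t))) hWd pM pW t
    have hW0' : W 0 = fun i => f (basePt (γ 0)) * fibPt (E 0) i := funext hW0
    rw [sq_warped_fib _ _ _ hE0] at hNE
    have hNE' : sq gF (fibPt (γ 0)) (vel (fibCurve γ) 0) (fibPt (E 0)) = 0 :=
      (mul_eq_zero.1 hNE).resolve_left (pow_ne_zero 2 (hne 0))
    rw [sq_smul_left, sq_smul_left, hW0', sq_smul_right] at h
    rw [show fibCurve γ 0 = fibPt (γ 0) from rfl, hNE', mul_zero, mul_zero] at h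
    exact (mul_eq_zero.1 h).resolve_left (pow_ne_zero 2 (hne t))
  have hWW : sq gF (fibPt (γ u)) (W u) (W u) = 1 := by
    have h := sq_parallel_const H.hF hfd hWd hWd pW pW u
    have hW0' : W 0 = fun i => f (basePt (γ 0)) * fibPt (E 0) i := funext hW0
    rw [sq_warped_fib _ _ _ hE0] at hEE
    rw [hW0', sq_smul_left, sq_smul_right] at h
    refine h.trans (Eq.trans ?_ hEE)
    rw [show fibCurve γ 0 = fibPt (γ 0) from rfl]
    ring
  -- the explicit candidate
  let C : ℝ → (Fin d₁ ⊕ Fin d₂) → ℝ := fun w =>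
    Sum.elim (fun _ => 0) (fun i => (f (basePt (γ w)))⁻¹ * W w i)
  have hCd : ∀ μ, Differentiable ℝ fun w => C w μ := by
    rintro (a | i)
    · exact differentiable_const _
    · exact fun t => ((hφ t).differentiableAt.inv (hne t)).mul (hWd i t)
  have pC : IsParallel (warped gB gF f) γ C := by
    rintro t (a | i)
    · rw [H.covD_inl]
      have h1 : fibPt (C t) = fun i => (f (basePt (γ t)))⁻¹ * W t i := rfl
      have h2 : (fun w => basePt (C w)) = fun _ _ => 0 := rfl
      rw [h1, sq_smul_right, hMW, h2]
      simp [covD]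
    · rw [H.covD_inr]
      have h1 : (fun w => fibPt (C w)) = fun w i => (f (basePt (γ w)))⁻¹ * W w i := rfl
      have h2 : basePt (C t) = fun _ => 0 := rfl
      have h3 : fibPt (C t) i = (f (basePt (γ t)))⁻¹ * W t i := rfl
      rw [h1, h2, h3, covD_smul (s := fun w => (f (basePt (γ w)))⁻¹) ((hφ t).inv (hne t)) (fun a => hWd a t), pW t i]
      have h5 := hne t
      simp only [mul_zero, Finset.sum_const_zero, zero_mul, add_zero]
      field_simp
      ring
  have hEC : E u = C u := by
    refine parallel_unique (smoothMetric_warped H.hB H.hF H.hf H.hfpos) hγ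
      (fun μ => (hE μ).differentiable (by simp)) hCd pE pC ?_ u
    funext μ
    rcases μ with a | i
    · exact hE0 a
    · have h5 := hne 0
      simp only [C, Sum.elim_inr, hW0]
      field_simp
  refine ⟨hMW u, hWW, fun a => ?_, fun i => ?_⟩
  · rw [hEC]; rfl
  · rw [hEC]; rfl

end

/-- Along a null geodesic `γ` orthogonal to (the lift of) a
compact submanifold `ζ_p ⊆ Y_p` of co-dimension `m`, with `{E_A}` the parallel
transports of an orthonormal tangent basis and `P^{νσ} = δ^{AB}E^ν_AE^σ_B`,
`R_{μνρσ}N^μN^ρP^{νσ}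
  = δ^{AB} R̄_{ijkl} N̄^i N̄^k Ē^j_{A∥} Ē^l_{B∥} − (D−m) f⁻¹ d²f/du²
  = f⁻⁴ δ^{AB} R̄_{ijkl} 𝒩^i 𝒩^k Ē^j_{A∥} Ē^l_{B∥} − (D−m) f⁻¹ d²f/du²`,
where `Ē_{A∥}` are the `ḡ`-parallel transports of `f|_p e_A` along the fiber
projection of `γ` and `𝒩^i = f² N̄^i`. -/
theorem curvature_contraction_along_normal_null_geodesic {n k m : ℕ}
    (hkm : k + m = 4 + n)
    (gB : (Fin 4 → ℝ) → Matrix (Fin 4) (Fin 4) ℝ)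
    (gF : (Fin n → ℝ) → Matrix (Fin n) (Fin n) ℝ)
    (f : (Fin 4 → ℝ) → ℝ)
    (hB : Lorentzian gB) (hF : Riemannian gF)
    (hf : ContDiff ℝ (⊤ : ℕ∞) f) (hfpos : ∀ y, 0 < f y)
    -- the compact submanifold `ζ ⊆ Y`, through whose point the geodesic starts
    (ζ : Set (Fin n → ℝ)) (hζ : IsCompact ζ)
    (γ : ℝ → (Fin 4 ⊕ Fin n) → ℝ) (hγs : SmoothCurve γ)
    (hq : fibPt (γ 0) ∈ ζ)
    (hgeo : IsGeodesic (warped gB gF f) γ)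
    (hnull : ∀ u, sq (warped gB gF f) (γ u) (vel γ u) (vel γ u) = 0)
    -- the parallel transports `E_A` of an orthonormal basis tangent to `ζ_p`
    (E : Fin k → ℝ → (Fin 4 ⊕ Fin n) → ℝ)
    (hEs : ∀ A, SmoothCurve (E A))
    (hEpar : ∀ A, IsParallel (warped gB gF f) γ (E A))
    (hEbase0 : ∀ (A) (a : Fin 4), E A 0 (Sum.inl a) = 0)
    (hEON : ∀ A B, sq (warped gB gF f) (γ 0) (E A 0) (E B 0)
        = if A = B then (1 : ℝ) else 0)
    (hEorthN : ∀ A, sq (warped gB gF f) (γ 0) (vel γ 0) (E A 0) = 0)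
    -- the `ḡ`-parallel transports `Ē_{A∥}` of `f|_p ē_A` along the fiber projection
    (EF : Fin k → ℝ → Fin n → ℝ)
    (hEFs : ∀ A, SmoothCurve (EF A))
    (hEFpar : ∀ (A) (u : ℝ) (i : Fin n),
      deriv (fun w => EF A w i) u
          + ∑ j, ∑ l, Γc gF i j l (fibPt (γ u)) * vel (fibCurve γ) u j * EF A u l = 0)
    (hEF0 : ∀ (A) (i : Fin n), EF A 0 i = f (basePt (γ 0)) * E A 0 (Sum.inr i)) :
    ∀ u : ℝ,
      (∑ μ, ∑ ν, ∑ ρ, ∑ σ, RiemLow (warped gB gF f) μ ν ρ σ (γ u)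
          * vel γ u μ * vel γ u ρ * (∑ A, E A u ν * E A u σ))
        = (∑ A, ∑ i, ∑ j, ∑ l, ∑ l',
            RiemLow gF i j l l' (fibPt (γ u))
              * vel (fibCurve γ) u i * EF A u j * vel (fibCurve γ) u l * EF A u l')
          - (k : ℝ) * (f (basePt (γ u)))⁻¹
              * deriv (fun w => deriv (fun w' => f (basePt (γ w'))) w) u ∧
      (∑ μ, ∑ ν, ∑ ρ, ∑ σ, RiemLow (warped gB gF f) μ ν ρ σ (γ u)
          * vel γ u μ * vel γ u ρ * (∑ A, E A u ν * E A u σ))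
        = ((f (basePt (γ u))) ^ 4)⁻¹ *
            (∑ A, ∑ i, ∑ j, ∑ l, ∑ l',
              RiemLow gF i j l l' (fibPt (γ u))
                * ((f (basePt (γ u))) ^ 2 * vel (fibCurve γ) u i) * EF A u j
                * ((f (basePt (γ u))) ^ 2 * vel (fibCurve γ) u l) * EF A u l')
          - (k : ℝ) * (f (basePt (γ u)))⁻¹
              * deriv (fun w => deriv (fun w' => f (basePt (γ w'))) w) u := by
  intro u
  have H : WHyp gB gF f := ⟨hB.1, hF.1, hf, hfpos⟩
  have hne : f (basePt (γ u)) ≠ 0 := (hfpos _).ne'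
  have hform := fun A => H.parallel_form hγs hgeo (hEs A) (hEpar A) (hEbase0 A)
    (by rw [hEON]; simp) (hEorthN A) (hEFs A) (hEFpar A) (hEF0 A) u
  have hmain : (∑ μ, ∑ ν, ∑ ρ, ∑ σ, RiemLow (warped gB gF f) μ ν ρ σ (γ u)
          * vel γ u μ * vel γ u ρ * (∑ A, E A u ν * E A u σ))
        = (∑ A, ∑ i, ∑ j, ∑ l, ∑ l',
            RiemLow gF i j l l' (fibPt (γ u))
              * vel (fibCurve γ) u i * EF A u j * vel (fibCurve γ) u l * EF A u l')
          - (k : ℝ) * (f (basePt (γ u)))⁻¹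
              * deriv (fun w => deriv (fun w' => f (basePt (γ w'))) w) u := by
    have hswap : (∑ μ, ∑ ν, ∑ ρ, ∑ σ, RiemLow (warped gB gF f) μ ν ρ σ (γ u)
          * vel γ u μ * vel γ u ρ * (∑ A, E A u ν * E A u σ))
        = ∑ A, ∑ μ, ∑ ν, ∑ ρ, ∑ σ, RiemLow (warped gB gF f) μ ν ρ σ (γ u)
          * vel γ u μ * vel γ u ρ * (E A u ν * E A u σ) := by
      simp only [Finset.mul_sum]
      conv_rhs => rw [Finset.sum_comm]
      refine Finset.sum_congr rfl fun μ _ => ?_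
      conv_rhs => rw [Finset.sum_comm]
      refine Finset.sum_congr rfl fun ν _ => ?_
      conv_rhs => rw [Finset.sum_comm]
      refine Finset.sum_congr rfl fun ρ _ => ?_
      rw [Finset.sum_comm]
    have hk : (k : ℝ) * (f (basePt (γ u)))⁻¹
              * deriv (fun w => deriv (fun w' => f (basePt (γ w'))) w) u
        = ∑ _A : Fin k, (f (basePt (γ u)))⁻¹
              * deriv (fun w => deriv (fun w' => f (basePt (γ w'))) w) u := by
      simp [mul_assoc]
    rw [hswap, hk, ← Finset.sum_sub_distrib]
    refine Finset.sum_congr rfl fun A _ => ?_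
    obtain ⟨h1, h2, h3, h4⟩ := hform A
    rw [H.contract (γ u) (vel γ u) (E A u) (fun i => (f (basePt (γ u)))⁻¹ * EF A u i) h3 h4,
      H.second_deriv hγs hgeo]
    rw [show fibPt (vel γ u) = vel (fibCurve γ) u from rfl,
      show basePt (vel γ u) = vel (baseCurve γ) u from rfl]
    simp only [sq_smul_left, sq_smul_right, h1, h2]
    have h5 : f (basePt (γ u)) ^ 2 * (∑ i, ∑ j, ∑ k, ∑ l, RiemLow gF i j k l (fibPt (γ u))
            * vel (fibCurve γ) u i * ((f (basePt (γ u)))⁻¹ * EF A u j) * vel (fibCurve γ) u k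
            * ((f (basePt (γ u)))⁻¹ * EF A u l))
        = ∑ i, ∑ j, ∑ l, ∑ l', RiemLow gF i j l l' (fibPt (γ u))
              * vel (fibCurve γ) u i * EF A u j * vel (fibCurve γ) u l * EF A u l' := by
      simp only [Finset.mul_sum]
      refine Finset.sum_congr rfl fun i _ => Finset.sum_congr rfl fun j _ =>
        Finset.sum_congr rfl fun l _ => Finset.sum_congr rfl fun l' _ => ?_
      field_simp
    rw [h5]
    field_simp
    ring
  refine ⟨hmain, hmain.trans ?_⟩
  congr 1
  simp only [Finset.mul_sum]
  refine Finset.sum_congr rfl fun A _ => Finset.sum_congr rfl fun i _ =>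
    Finset.sum_congr rfl fun j _ => Finset.sum_congr rfl fun l _ =>
    Finset.sum_congr rfl fun l' _ => ?_
  field_simp

end Paper
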